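/- For all real numbers u, q with q > 1 and 0 < u < 1, M_{(−u,−q)} is a probability measure on the set of all partitions: M_{(−u,−q)}(λ) ≥ 0 for every partition λ, and the sum of M_{(−u,−q)}(λ) over all partitions λ equals 1. Here M_{(−u,−q)} is obtained from the defining formula of M_{(u,q)} by replacing u with −u and q with −q. -/

import Mathlib

/-!
Put `x = -u`, `t = -1/q` and write `(a;t)_n = ∏_{i<n} (1 - a t^i)`. Pulling a factor `Q^(m²)` out
of each `glOrder Q m`, with `Q = -q`, turns the measure of `λ` into `∏_r (1 - x t^r)` times the
weight `x^|λ| t^(∑_j λ'_j²) / ∏_i (t;t)_{m_i(λ)}` (`measureM_partEquiv`). As `∑_j λ'_j²` and `|λ|`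
have the same parity and `x t > 0`, all weights are nonnegative, so it remains to show that they
add up to `∏_r (1 - x t^r)⁻¹` (`hasSum_weight`).

Let `P k` be the total weight of the partitions with exactly `k` parts. Removing the first column
of the diagram gives `P k = x^k t^(k²) ∑_{c ≤ k} P (k - c) / (t;t)_c`, where `c` is the number of
parts equal to `1` (`partSum_rec`). By the finite Cauchy identity (`finite_cauchy`), the numbers
`R k = x^k t^(k²) / ((t;t)_k (xt;t)_k)` satisfy the same recursion (`partGF_rec`). Induction on a
bound for the largest part yields `P k ≤ R k`, so the `P k` are finite, and then the recursion
forces `P k = R k` (`partSum_eq`). Letting `k → ∞` in the finite identity, by dominated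
convergence, gives `∑_k R k = ∏_r (1 - x t^r)⁻¹` (`hasSum_partGF`).
-/


open scoped BigOperators

/-- The "order of `GL(m,q)`" for a real parameter `q`:
`|GL(m,q)| = q^(m(m-1)/2) * ∏_{j=1}^m (q^j - 1)`. -/
noncomputable def glOrder (q : ℝ) (m : ℕ) : ℝ :=
  q ^ (m * (m - 1) / 2) * ∏ j ∈ Finset.range m, (q ^ (j + 1) - 1)

/-- The measure `M_{(u,q)}` on the set of all partitions of all nonnegative integers. -/
noncomputable def measureM (u q : ℝ) (lam : Σ n : ℕ, Nat.Partition n) : ℝ :=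
  (∏' r : ℕ, (1 - u / q ^ (r + 1))) * u ^ lam.1 /
    (q ^ (2 * ∑ i ∈ Finset.range (lam.1 + 1), ∑ h ∈ Finset.range i,
            h * lam.2.parts.count h * lam.2.parts.count i
        + ∑ i ∈ Finset.range (lam.1 + 1), (i - 1) * lam.2.parts.count i ^ 2) *
      ∏ i ∈ Finset.range (lam.1 + 1), glOrder q (lam.2.parts.count i))

/-! ### The finite Cauchy identity -/

/-- The finite `t`-Pochhammer product `(a t; t)_n = ∏_{i=1}^n (1 - a t^i)`. -/
noncomputable def poch (a t : ℝ) (n : ℕ) : ℝ := ∏ i ∈ Finset.range n, (1 - a * t ^ (i + 1))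

lemma poch_zero (a t : ℝ) : poch a t 0 = 1 := by simp [poch]

lemma poch_succ (a t : ℝ) (n : ℕ) : poch a t (n + 1) = poch a t n * (1 - a * t ^ (n + 1)) := by
  simp [poch, Finset.prod_range_succ]

lemma poch_succ' (a t : ℝ) (n : ℕ) : poch a t (n + 1) = (1 - a * t) * poch (a * t) t n := by
  simp only [poch, Finset.prod_range_succ', zero_add, pow_one]
  rw [mul_comm]
  congr 1
  exact Finset.prod_congr rfl fun i _ => by ring

lemma abs_mul_pow_lt_one {a t : ℝ} (ha : |a| ≤ 1) (ht : |t| < 1) (i : ℕ) :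
    |a * t ^ (i + 1)| < 1 := by
  rw [abs_mul, abs_pow]
  have h1 : |t| ^ (i + 1) < 1 := pow_lt_one₀ (abs_nonneg t) ht (by omega)
  have h2 : 0 ≤ |t| ^ (i + 1) := by positivity
  nlinarith [abs_nonneg a]

lemma factor_pos {a t : ℝ} (ha : |a| ≤ 1) (ht : |t| < 1) (i : ℕ) : 0 < 1 - a * t ^ (i + 1) := by
  linarith [(abs_lt.1 (abs_mul_pow_lt_one ha ht i)).2]

lemma poch_pos {a t : ℝ} (ha : |a| ≤ 1) (ht : |t| < 1) (n : ℕ) : 0 < poch a t n :=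
  Finset.prod_pos fun i _ => factor_pos ha ht i

/-- The finite Cauchy (Durfee rectangle) identity
`∑_j x^j t^{j²} / ((t;t)_j (t;t)_{k-j} (xt;t)_j) = 1 / ((t;t)_k (xt;t)_k)`. -/
lemma finite_cauchy {t : ℝ} (ht : |t| < 1) (k : ℕ) : ∀ x : ℝ, |x| ≤ 1 →
    ∑ j ∈ Finset.range (k + 1), x ^ j * t ^ (j ^ 2) /
      (poch 1 t j * poch 1 t (k - j) * poch x t j) = 1 / (poch 1 t k * poch x t k) := by
  induction k with
  | zero => intro x _; simp [poch_zero]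
  | succ k ih =>
    intro x hx
    have h1 : |(1 : ℝ)| ≤ 1 := by simp
    have hxt : |x * t| ≤ 1 := by simpa using (abs_mul_pow_lt_one hx ht 0).le
    have hp : ∀ n, poch 1 t n ≠ 0 := fun n => (poch_pos h1 ht n).ne'
    have hpx : ∀ n, poch x t n ≠ 0 := fun n => (poch_pos hx ht n).ne'
    have hpy : ∀ n, poch (x * t) t n ≠ 0 := fun n => (poch_pos hxt ht n).ne'
    have hk : 1 - t ^ (k + 1) ≠ 0 := by simpa using (factor_pos h1 ht k).ne'
    have hf : 1 - x * t ≠ 0 := by simpa using (factor_pos hx ht 0).ne'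
    -- The `t`-Pascal rule `1 - t^{k+1} = t^j (1 - t^{k+1-j}) + (1 - t^j)`, applied termwise.
    have key : (1 - t ^ (k + 1)) * ∑ j ∈ Finset.range (k + 1 + 1), x ^ j * t ^ (j ^ 2) /
        (poch 1 t j * poch 1 t (k + 1 - j) * poch x t j) =
        ∑ j ∈ Finset.range (k + 1), t ^ j * (x ^ j * t ^ (j ^ 2) /
          (poch 1 t j * poch 1 t (k - j) * poch x t j)) +
        ∑ j ∈ Finset.range (k + 1), x ^ (j + 1) * t ^ ((j + 1) ^ 2) /
          (poch 1 t j * poch 1 t (k - j) * poch x t (j + 1)) := by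
      have e1 : ∀ j ∈ Finset.range (k + 1), t ^ j * (x ^ j * t ^ (j ^ 2) /
          (poch 1 t j * poch 1 t (k - j) * poch x t j)) =
          t ^ j * (1 - t ^ (k + 1 - j)) * (x ^ j * t ^ (j ^ 2) /
          (poch 1 t j * poch 1 t (k + 1 - j) * poch x t j)) := by
        intro j hj
        have hj' : k + 1 - j = (k - j) + 1 := by have := Finset.mem_range.1 hj; omega
        have h2 : 1 - t ^ (k - j + 1) ≠ 0 := by simpa using (factor_pos h1 ht (k - j)).ne'
        have := hp j; have := hp (k - j); have := hpx j
        rw [hj', poch_succ 1 t (k - j), one_mul]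
        field_simp
      have e2 : ∀ j ∈ Finset.range (k + 1), x ^ (j + 1) * t ^ ((j + 1) ^ 2) /
          (poch 1 t j * poch 1 t (k - j) * poch x t (j + 1)) =
          (1 - t ^ (j + 1)) * (x ^ (j + 1) * t ^ ((j + 1) ^ 2) /
          (poch 1 t (j + 1) * poch 1 t (k + 1 - (j + 1)) * poch x t (j + 1))) := by
        intro j hj
        have h2 : 1 - t ^ (j + 1) ≠ 0 := by simpa using (factor_pos h1 ht j).ne'
        have := hp j; have := hp (k - j); have := hpx (j + 1)
        rw [Nat.add_sub_add_right, poch_succ 1 t j, one_mul]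
        field_simp
      rw [Finset.sum_congr rfl e1, Finset.sum_congr rfl e2]
      have e3 := Finset.sum_range_succ (fun j => t ^ j * (1 - t ^ (k + 1 - j)) *
        (x ^ j * t ^ (j ^ 2) / (poch 1 t j * poch 1 t (k + 1 - j) * poch x t j))) (k + 1)
      have e4 := Finset.sum_range_succ' (fun j => (1 - t ^ j) *
        (x ^ j * t ^ (j ^ 2) / (poch 1 t j * poch 1 t (k + 1 - j) * poch x t j))) (k + 1)
      simp only [Nat.sub_self, pow_zero, sub_self, mul_zero, zero_mul, add_zero] at e3 e4
      rw [← e3, ← e4, ← Finset.sum_add_distrib, Finset.mul_sum]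
      refine Finset.sum_congr rfl fun j hj => ?_
      have : t ^ (k + 1) = t ^ j * t ^ (k + 1 - j) := by
        rw [← pow_add]; congr 1; have := Finset.mem_range.1 hj; omega
      rw [this]; ring
    have ihy := ih (x * t) hxt
    have comb : ∑ j ∈ Finset.range (k + 1), t ^ j * (x ^ j * t ^ (j ^ 2) /
          (poch 1 t j * poch 1 t (k - j) * poch x t j)) +
        ∑ j ∈ Finset.range (k + 1), x ^ (j + 1) * t ^ ((j + 1) ^ 2) /
          (poch 1 t j * poch 1 t (k - j) * poch x t (j + 1)) =
        1 / (1 - x * t) * (1 / (poch 1 t k * poch (x * t) t k)) := by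
      rw [← ihy, ← Finset.sum_add_distrib, Finset.mul_sum]
      refine Finset.sum_congr rfl fun j _ => ?_
      have := hp j; have := hp (k - j); have := hpy j
      have h3 := factor_pos hx ht j
      have e5 : poch x t j = (1 - x * t) * poch (x * t) t j / (1 - x * t ^ (j + 1)) := by
        rw [eq_div_iff h3.ne', ← poch_succ, poch_succ']
      have h4 := h3.ne'
      rw [poch_succ', e5]
      field_simp
      ring
    rw [comb] at key
    rw [poch_succ 1 t k, poch_succ' x t k, one_mul]
    apply mul_left_cancel₀ hk
    rw [key]
    have := hp k; have := hpy k
    field_simp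

/-! ### Infinite product and the Cauchy identity -/

lemma poch_tendsto {a t : ℝ} (ha : |a| ≤ 1) (ht : |t| < 1) :
    0 < ∏' r : ℕ, (1 - a * t ^ (r + 1)) ∧
    Filter.Tendsto (poch a t) Filter.atTop (nhds (∏' r : ℕ, (1 - a * t ^ (r + 1)))) := by
  have hs : Summable fun r : ℕ => -(a * t ^ (r + 1)) := by
    have := (summable_geometric_of_abs_lt_one ht).mul_left (-(a * t))
    refine this.congr fun r => ?_
    ring
  have hlog := Real.summable_log_one_add_of_summable hs
  have hpos : ∀ r : ℕ, 0 < 1 + -(a * t ^ (r + 1)) := fun r => by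
    simpa [sub_eq_add_neg] using factor_pos ha ht r
  have hm := Real.multipliable_of_summable_log hpos hlog
  have he := Real.rexp_tsum_eq_tprod hpos hlog
  simp only [← sub_eq_add_neg] at hm he
  exact ⟨he ▸ Real.exp_pos _, hm.tendsto_prod_tprod_nat⟩

lemma poch_bounds {a t : ℝ} (ha : |a| ≤ 1) (ht : |t| < 1) :
    ∃ C : ℝ, ∀ n, poch a t n ≤ C ∧ (poch a t n)⁻¹ ≤ C := by
  obtain ⟨hL, hT⟩ := poch_tendsto ha ht
  obtain ⟨B, hB⟩ := hT.bddAbove_range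
  obtain ⟨B', hB'⟩ := (hT.inv₀ hL.ne').bddAbove_range
  exact ⟨max B B', fun n => ⟨(hB ⟨n, rfl⟩).trans (le_max_left _ _),
    (hB' ⟨n, rfl⟩).trans (le_max_right _ _)⟩⟩

/-- The generating function of the partitions with exactly `k` parts, in closed form:
`x^k t^{k²} / ((t;t)_k (xt;t)_k)`. -/
noncomputable def partGF (x t : ℝ) (k : ℕ) : ℝ :=
  x ^ k * t ^ (k ^ 2) / (poch 1 t k * poch x t k)

lemma pow_mul_pow_sq_nonneg {x t : ℝ} (hxt : 0 ≤ x * t) (k : ℕ) : 0 ≤ x ^ k * t ^ (k ^ 2) := by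
  have h : x ^ k * t ^ (k ^ 2) = (x * t) ^ k * t ^ (k * (k - 1)) := by
    rw [mul_pow, mul_assoc, ← pow_add]
    congr 2
    rcases k with _ | k
    · rfl
    · simp only [Nat.add_sub_cancel]; ring
  rw [h]
  exact mul_nonneg (pow_nonneg hxt k) ((Nat.even_mul_pred_self k).pow_nonneg t)

lemma partGF_nonneg {x t : ℝ} (hx : |x| ≤ 1) (ht : |t| < 1) (hxt : 0 ≤ x * t) (k : ℕ) :
    0 ≤ partGF x t k :=
  div_nonneg (pow_mul_pow_sq_nonneg hxt k)
    (mul_pos (poch_pos (by simp) ht k) (poch_pos hx ht k)).le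

/-- Removing the first column, at the level of the closed forms; `c` is the number of parts
equal to `1`. -/
lemma partGF_rec {x t : ℝ} (hx : |x| ≤ 1) (ht : |t| < 1) (k : ℕ) :
    partGF x t k = ∑ c ∈ Finset.range (k + 1),
      x ^ k * t ^ (k ^ 2) / poch 1 t c * partGF x t (k - c) := by
  rw [partGF, div_eq_mul_one_div, ← finite_cauchy ht k x hx, Finset.mul_sum,
    ← Finset.sum_range_reflect]
  refine Finset.sum_congr rfl fun c hc => ?_
  have hc' : k + 1 - 1 - c = k - c := by omega
  have hc2 : k - (k - c) = c := by have := Finset.mem_range.1 hc; omega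
  rw [hc', hc2, partGF]
  have h1 := (poch_pos (a := 1) (by simp) ht c).ne'
  have h2 := (poch_pos (a := 1) (by simp) ht (k - c)).ne'
  have h3 := (poch_pos hx ht (k - c)).ne'
  field_simp

/-- Cauchy's identity, the limit `k → ∞` of `finite_cauchy`. -/
lemma hasSum_partGF {x t : ℝ} (hx : |x| < 1) (ht : |t| < 1) (hxt : 0 ≤ x * t) :
    HasSum (partGF x t) (∏' r : ℕ, (1 - x * t ^ (r + 1)))⁻¹ := by
  have h1 : |(1 : ℝ)| ≤ 1 := by simp
  obtain ⟨C, hC⟩ := poch_bounds h1 ht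
  obtain ⟨C', hC'⟩ := poch_bounds hx.le ht
  obtain ⟨hL, hT⟩ := poch_tendsto hx.le ht
  obtain ⟨hL1, hT1⟩ := poch_tendsto h1 ht
  have hC0 : 0 ≤ C := (poch_pos h1 ht 0).le.trans (hC 0).1
  have hnn := partGF_nonneg hx.le ht hxt
  have hsum : Summable (partGF x t) := by
    refine Summable.of_nonneg_of_le hnn (fun k => ?_)
      ((summable_geometric_of_abs_lt_one (r := |x|) (by simpa using hx)).mul_right (C * C'))
    have h2 : x ^ k * t ^ (k ^ 2) ≤ |x| ^ k := by
      refine (le_abs_self _).trans ?_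
      rw [abs_mul, abs_pow, abs_pow]
      exact mul_le_of_le_one_right (by positivity) (pow_le_one₀ (abs_nonneg t) ht.le)
    rw [partGF, div_eq_mul_inv, mul_inv]
    have p1 := inv_pos.2 (poch_pos h1 ht k)
    have p2 := inv_pos.2 (poch_pos hx.le ht k)
    gcongr
    · exact (hC k).2
    · exact (hC' k).2
  have htan : Filter.Tendsto (fun n => ∑' j, if j ≤ n then
      partGF x t j * (poch 1 t n * (poch 1 t (n - j))⁻¹) else 0) Filter.atTop
      (nhds (∑' j, partGF x t j)) := by
    refine tendsto_tsum_of_dominated_convergence (bound := fun j => partGF x t j * (C * C))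
      (hsum.mul_right _) (fun j => ?_) (Filter.Eventually.of_forall fun n j => ?_)
    · have hsub : Filter.Tendsto (fun n => poch 1 t (n - j)) Filter.atTop
          (nhds (∏' r : ℕ, (1 - 1 * t ^ (r + 1)))) :=
        hT1.comp (Filter.tendsto_sub_atTop_nat j)
      have := (hT1.mul (hsub.inv₀ hL1.ne')).const_mul (partGF x t j)
      rw [mul_inv_cancel₀ hL1.ne', mul_one] at this
      refine this.congr' ?_
      filter_upwards [Filter.eventually_ge_atTop j] with n hn
      rw [if_pos hn]
    · split_ifs
      · have p1 := inv_pos.2 (poch_pos h1 ht (n - j))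
        have p2 := poch_pos h1 ht n
        rw [Real.norm_of_nonneg (mul_nonneg (hnn j) (by positivity))]
        have := hnn j
        gcongr
        · exact (hC n).1
        · exact (hC (n - j)).2
      · rw [norm_zero]
        exact mul_nonneg (hnn j) (by positivity)
  have heq : (fun n => ∑' j, if j ≤ n then
      partGF x t j * (poch 1 t n * (poch 1 t (n - j))⁻¹) else 0) = fun n => (poch x t n)⁻¹ := by
    funext n
    rw [tsum_eq_sum (s := Finset.range (n + 1))
      (fun j hj => if_neg (by simpa using hj))]
    have hn := (poch_pos h1 ht n).ne'
    have : (poch x t n)⁻¹ = poch 1 t n * (1 / (poch 1 t n * poch x t n)) := by field_simp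
    rw [this, ← finite_cauchy ht n x hx.le, Finset.mul_sum]
    refine Finset.sum_congr rfl fun j hj => ?_
    rw [if_pos (by simpa [Nat.lt_succ_iff] using hj), partGF]
    have h2 := (poch_pos h1 ht j).ne'
    have h3 := (poch_pos h1 ht (n - j)).ne'
    have h4 := (poch_pos hx.le ht j).ne'
    field_simp
  rw [heq] at htan
  rw [← tendsto_nhds_unique htan (hT.inv₀ hL.ne')]
  exact hsum.hasSum

/-! ### Partitions as multisets, and removal of the first column -/

/-- The partition whose first column has `c` cells more than the second one, and which becomes
`s` when the first column is removed. A multiset `s` of natural numbers encodes the partition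
with parts `a + 1`, `a ∈ s`. -/
def addCol (c : ℕ) (s : Multiset ℕ) : Multiset ℕ := Multiset.replicate c 0 + s.map Nat.succ

lemma count_zero_addCol (c : ℕ) (s : Multiset ℕ) : (addCol c s).count 0 = c := by
  simp [addCol]

lemma count_succ_addCol (c : ℕ) (s : Multiset ℕ) (i : ℕ) :
    (addCol c s).count (i + 1) = s.count i := by
  have := Multiset.count_map_eq_count' Nat.succ s Nat.succ_injective i
  simpa [addCol, Multiset.count_replicate] using this

lemma card_addCol (c : ℕ) (s : Multiset ℕ) : (addCol c s).card = c + s.card := by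
  simp [addCol]

lemma addCol_lt (c : ℕ) (s : Multiset ℕ) (N : ℕ) :
    (∀ a ∈ addCol c s, a < N + 1) ↔ ∀ a ∈ s, a < N := by
  constructor
  · intro h a ha
    have := h (a + 1) (by simp [addCol, ha])
    omega
  · intro h a ha
    rcases a with _ | a
    · omega
    · have : a ∈ s := by
        rw [← Multiset.count_pos] at ha ⊢
        rwa [count_succ_addCol] at ha
      have := h a this
      omega

/-- Removal of the first column is a bijection. -/
def addColEquiv : ℕ × Multiset ℕ ≃ Multiset ℕ where
  toFun p := addCol p.1 p.2
  invFun s := (s.count 0, (s.filter (· ≠ 0)).map Nat.pred)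
  left_inv := by
    rintro ⟨c, s⟩
    refine Prod.ext (count_zero_addCol c s) ?_
    have h1 : (Multiset.replicate c 0).filter (· ≠ 0) = 0 := by
      rw [Multiset.filter_eq_nil]
      intro a ha
      simp [Multiset.eq_of_mem_replicate ha]
    have h2 : (s.map Nat.succ).filter (· ≠ 0) = s.map Nat.succ := by
      rw [Multiset.filter_eq_self]
      intro a ha
      obtain ⟨b, _, rfl⟩ := Multiset.mem_map.1 ha
      simp
    simp only [addCol, Multiset.filter_add, h1, h2, zero_add, Multiset.map_map]
    simp
  right_inv := by
    intro s
    have h : ((s.filter (· ≠ 0)).map Nat.pred).map Nat.succ = s.filter (· ≠ 0) := by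
      rw [Multiset.map_map]
      conv_rhs => rw [← Multiset.map_id (s.filter (· ≠ 0))]
      refine Multiset.map_congr rfl fun a ha => ?_
      have := (Multiset.mem_filter.1 ha).2
      simp only [Function.comp, id]
      exact Nat.succ_pred this
    simp only [addCol, h]
    rw [← Multiset.filter_eq' s 0]
    exact Multiset.filter_add_not _ s

/-- The sum `∑_{a,b} min(a+1, b+1)` over all pairs of parts; it is the sum `∑_j (λ'_j)²` of the
squares of the column lengths. -/
def colSq (s : Multiset ℕ) : ℕ := (s.map fun a => (s.map fun b => min a b + 1).sum).sum

lemma colSq_addCol (c : ℕ) (s : Multiset ℕ) :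
    colSq (addCol c s) = (c + s.card) ^ 2 + colSq s := by
  simp only [colSq, Multiset.sum_map_add, Multiset.map_const', Multiset.sum_replicate,
    card_addCol]
  simp only [addCol, Multiset.map_add, Multiset.sum_add, Multiset.map_replicate,
    Multiset.map_map, Multiset.sum_replicate, Function.comp_def, Nat.min_zero, Nat.zero_min,
    Nat.succ_eq_add_one, Nat.add_min_add_right, Multiset.sum_map_add, Multiset.map_const']
  simp only [smul_eq_mul, mul_zero, mul_one, zero_add]
  ring

/-- The weight `x^{|λ|} t^{∑_j (λ'_j)²} / ∏_i (t;t)_{m_i(λ)}` of a partition. -/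
noncomputable def weight (x t : ℝ) (s : Multiset ℕ) : ℝ :=
  x ^ (s.map Nat.succ).sum * t ^ colSq s / ∏ i ∈ s.toFinset, poch 1 t (s.count i)

lemma prod_poch_eq {t : ℝ} {s : Multiset ℕ} {N : ℕ} (h : ∀ a ∈ s, a < N) :
    ∏ i ∈ s.toFinset, poch 1 t (s.count i) = ∏ i ∈ Finset.range N, poch 1 t (s.count i) := by
  refine Finset.prod_subset (fun a ha => ?_) (fun a _ ha => ?_)
  · simpa using h a (by simpa using ha)
  · rw [Multiset.count_eq_zero_of_notMem (by simpa using ha), poch_zero]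

lemma exists_bound (s : Multiset ℕ) : ∃ N, ∀ a ∈ s, a < N :=
  ⟨s.sup + 1, fun _ ha => Nat.lt_succ_of_le (Multiset.le_sup ha)⟩

lemma weight_addCol (x t : ℝ) (c : ℕ) (s : Multiset ℕ) :
    weight x t (addCol c s) =
      x ^ (c + s.card) * t ^ ((c + s.card) ^ 2) / poch 1 t c * weight x t s := by
  obtain ⟨N, hN⟩ := exists_bound s
  have h1 : ((addCol c s).map Nat.succ).sum = (c + s.card) + (s.map Nat.succ).sum := by
    simp only [addCol, Multiset.map_add, Multiset.map_map, Multiset.sum_add,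
      Multiset.map_replicate, Multiset.sum_replicate, Function.comp_def, Nat.succ_eq_add_one,
      Multiset.sum_map_add]
    simp
    ring
  rw [weight, weight, h1, colSq_addCol, prod_poch_eq ((addCol_lt c s N).2 hN), prod_poch_eq hN,
    Finset.prod_range_succ', count_zero_addCol]
  simp only [count_succ_addCol, pow_add _ _ (colSq s), pow_add _ _ (s.map Nat.succ).sum]
  rw [div_mul_div_comm, mul_comm (poch 1 t c)]
  congr 1
  ring

lemma weight_nonneg {x t : ℝ} (ht : |t| < 1) (hxt : 0 ≤ x * t) (s : Multiset ℕ) :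
    0 ≤ weight x t s := by
  refine div_nonneg ?_ (Finset.prod_nonneg fun i _ => (poch_pos (by simp) ht _).le)
  induction s using Multiset.induction with
  | empty => simp [colSq]
  | cons a s ih =>
    -- The off-diagonal terms of `colSq` come in equal pairs.
    have h : colSq (a ::ₘ s) = colSq s + (a + 1) + 2 * (s.map fun b => min a b + 1).sum := by
      simp only [colSq, Multiset.map_cons, Multiset.sum_cons, Multiset.sum_map_add,
        min_self, min_comm _ a]
      ring
    rw [h, Multiset.map_cons, Multiset.sum_cons]
    have e : x ^ (a.succ + (s.map Nat.succ).sum) *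
        t ^ (colSq s + (a + 1) + 2 * (s.map fun b => min a b + 1).sum) =
        (x * t) ^ (a + 1) * (x ^ (s.map Nat.succ).sum * t ^ colSq s) *
          (t ^ 2) ^ (s.map fun b => min a b + 1).sum := by
      rw [Nat.succ_eq_add_one, mul_pow, ← pow_mul]
      ring
    rw [e]
    positivity

/-! ### The generating function of partitions by number of parts -/

open scoped ENNReal in
/-- The total weight of the partitions with exactly `k` parts that satisfy `p`. -/
noncomputable def partSum (x t : ℝ) (p : Multiset ℕ → Prop) (k : ℕ) : ℝ≥0∞ :=
  open Classical in
  ∑' s : Multiset ℕ, if s.card = k ∧ p s then ENNReal.ofReal (weight x t s) else 0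

/-- Removing the first column turns property `p` into `p'`. -/
lemma partSum_rec {x t : ℝ} (ht : |t| < 1) (hxt : 0 ≤ x * t) {p p' : Multiset ℕ → Prop}
    (hp : ∀ c s, p (addCol c s) ↔ p' s) (k : ℕ) :
    partSum x t p k = ∑ c ∈ Finset.range (k + 1),
      ENNReal.ofReal (x ^ k * t ^ (k ^ 2) / poch 1 t c) * partSum x t p' (k - c) := by
  classical
  rw [partSum, ← addColEquiv.tsum_eq, ENNReal.tsum_prod (f := fun c s =>
    if (addColEquiv (c, s)).card = k ∧ p (addColEquiv (c, s)) then
      ENNReal.ofReal (weight x t (addColEquiv (c, s))) else 0)]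
  simp only [addColEquiv, Equiv.coe_fn_mk, card_addCol, hp]
  rw [tsum_eq_sum (s := Finset.range (k + 1))]
  · refine Finset.sum_congr rfl fun c hc => ?_
    have hc' := Finset.mem_range.1 hc
    rw [partSum, ← ENNReal.tsum_mul_left]
    refine tsum_congr fun s => ?_
    by_cases h : c + s.card = k ∧ p' s
    · rw [if_pos h, if_pos ⟨by omega, h.2⟩, weight_addCol, h.1, ENNReal.ofReal_mul]
      exact div_nonneg (pow_mul_pow_sq_nonneg hxt k) (poch_pos (by simp) ht c).le
    · rw [if_neg h, if_neg (fun h' => h ⟨by omega, h'.2⟩), mul_zero]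
  · intro c hc
    have hc' : ¬ c < k + 1 := by simpa using hc
    rw [ENNReal.tsum_eq_zero]
    intro s
    exact if_neg fun h => hc' (by omega)

lemma partSum_zero {x t : ℝ} {p : Multiset ℕ → Prop} (hp : p 0) : partSum x t p 0 = 1 := by
  classical
  rw [partSum, tsum_eq_single 0]
  · simp [weight, colSq, hp]
  · intro s hs
    exact if_neg fun h => hs (Multiset.card_eq_zero.1 h.1)

lemma partGF_zero (x t : ℝ) : partGF x t 0 = 1 := by simp [partGF, poch_zero]

/-- Bounding the number of columns by `N` makes the recursion well-founded, so that the truncated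
sums can be compared with the closed form, which satisfies the untruncated recursion. -/
lemma partSum_lt_le {x t : ℝ} (hx : |x| ≤ 1) (ht : |t| < 1) (hxt : 0 ≤ x * t) (N : ℕ) :
    ∀ k, partSum x t (fun s => ∀ a ∈ s, a < N) k ≤ ENNReal.ofReal (partGF x t k) := by
  classical
  induction N with
  | zero =>
    intro k
    rcases k with _ | k
    · rw [partSum_zero (by simp), partGF_zero]; simp
    · rw [partSum, ENNReal.tsum_eq_zero.2]
      · exact zero_le
      · intro s
        refine if_neg fun h => ?_
        obtain ⟨a, ha⟩ := Multiset.card_pos_iff_exists_mem.1 (by omega : 0 < s.card)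
        exact absurd (h.2 a ha) (by omega)
  | succ N ih =>
    intro k
    rw [partSum_rec ht hxt (fun c s => addCol_lt c s N), partGF_rec hx ht k,
      ENNReal.ofReal_sum_of_nonneg]
    · refine Finset.sum_le_sum fun c _ => ?_
      rw [ENNReal.ofReal_mul]
      · gcongr
        exact ih _
      · exact div_nonneg (pow_mul_pow_sq_nonneg hxt k) (poch_pos (by simp) ht c).le
    · intro c _
      exact mul_nonneg (div_nonneg (pow_mul_pow_sq_nonneg hxt k) (poch_pos (by simp) ht c).le)
        (partGF_nonneg hx ht hxt _)

lemma partSum_le {x t : ℝ} (hx : |x| ≤ 1) (ht : |t| < 1) (hxt : 0 ≤ x * t) (k : ℕ) :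
    partSum x t (fun _ => True) k ≤ ENNReal.ofReal (partGF x t k) := by
  classical
  rw [partSum, ENNReal.tsum_eq_iSup_sum]
  refine iSup_le fun F => ?_
  choose b hb using exists_bound
  refine le_trans ?_ (partSum_lt_le hx ht hxt (F.sup b) k)
  rw [partSum]
  refine le_trans (le_of_eq ?_) (ENNReal.sum_le_tsum F)
  refine Finset.sum_congr rfl fun s hs => ?_
  have : ∀ a ∈ s, a < F.sup b := fun a ha => (hb s a ha).trans_le (Finset.le_sup hs)
  simp only [and_true, and_iff_left this]

/-- Once finiteness is known, the recursion determines the sums: the coefficient of the unknown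
with index `k` on the right hand side is `x^k t^{k²} ≠ 1`. -/
lemma partSum_eq {x t : ℝ} (hx : |x| ≤ 1) (ht : |t| < 1) (hxt : 0 ≤ x * t) (k : ℕ) :
    partSum x t (fun _ => True) k = ENNReal.ofReal (partGF x t k) := by
  induction k using Nat.strong_induction_on with
  | _ k ih =>
  rcases k with _ | k
  · rw [partSum_zero trivial, partGF_zero]; simp
  have hfin : ∀ j, partSum x t (fun _ => True) j ≠ ⊤ := fun j =>
    ne_top_of_le_ne_top ENNReal.ofReal_ne_top (partSum_le hx ht hxt j)
  have hnn : ∀ c, 0 ≤ x ^ (k + 1) * t ^ ((k + 1) ^ 2) / poch 1 t c := fun c =>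
    div_nonneg (pow_mul_pow_sq_nonneg hxt _) (poch_pos (by simp) ht c).le
  have h1 := congrArg ENNReal.toReal
    (partSum_rec (p := fun _ => True) (p' := fun _ => True) ht hxt (fun _ _ => Iff.rfl) (k + 1))
  rw [ENNReal.toReal_sum (fun c _ => ENNReal.mul_ne_top ENNReal.ofReal_ne_top (hfin _))] at h1
  simp only [ENNReal.toReal_mul, ENNReal.toReal_ofReal (hnn _)] at h1
  have h2 := partGF_rec hx ht (k + 1)
  rw [Finset.sum_range_succ'] at h1 h2
  have h3 : ∀ c ∈ Finset.range (k + 1),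
      x ^ (k + 1) * t ^ ((k + 1) ^ 2) / poch 1 t (c + 1) *
        (partSum x t (fun _ => True) (k + 1 - (c + 1))).toReal =
      x ^ (k + 1) * t ^ ((k + 1) ^ 2) / poch 1 t (c + 1) * partGF x t (k + 1 - (c + 1)) := by
    intro c _
    rw [ih _ (by omega), ENNReal.toReal_ofReal (partGF_nonneg hx ht hxt _)]
  rw [Finset.sum_congr rfl h3] at h1
  simp only [poch_zero, div_one, Nat.sub_zero] at h1 h2
  have hlt : x ^ (k + 1) * t ^ ((k + 1) ^ 2) < 1 := by
    refine (le_abs_self _).trans_lt ?_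
    rw [abs_mul, abs_pow, abs_pow]
    have a1 : |x| ^ (k + 1) ≤ 1 := pow_le_one₀ (abs_nonneg x) hx
    have a2 : |t| ^ ((k + 1) ^ 2) < 1 := pow_lt_one₀ (abs_nonneg t) ht (by positivity)
    have a3 : 0 ≤ |t| ^ ((k + 1) ^ 2) := by positivity
    nlinarith
  rw [← ENNReal.ofReal_toReal (hfin (k + 1))]
  congr 1
  have h4 : (1 - x ^ (k + 1) * t ^ ((k + 1) ^ 2)) *
      ((partSum x t (fun _ => True) (k + 1)).toReal - partGF x t (k + 1)) = 0 := by
    linarith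
  rcases mul_eq_zero.1 h4 with h | h
  · linarith
  · linarith

/-- The total weight of all partitions is `∏_{r ≥ 1} (1 - x t^r)⁻¹`. -/
lemma hasSum_weight {x t : ℝ} (hx : |x| < 1) (ht : |t| < 1) (hxt : 0 ≤ x * t) :
    HasSum (weight x t) (∏' r : ℕ, (1 - x * t ^ (r + 1)))⁻¹ := by
  classical
  have hR := hasSum_partGF hx ht hxt
  have hnn := partGF_nonneg hx.le ht hxt
  have htot : ∑' s, ENNReal.ofReal (weight x t s) =
      ENNReal.ofReal (∏' r : ℕ, (1 - x * t ^ (r + 1)))⁻¹ := by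
    rw [← hR.tsum_eq, ENNReal.ofReal_tsum_of_nonneg hnn hR.summable]
    simp only [← partSum_eq hx.le ht hxt, partSum]
    rw [ENNReal.tsum_comm]
    refine tsum_congr fun s => ?_
    simp
  have h := ENNReal.hasSum_toReal (f := fun s => ENNReal.ofReal (weight x t s))
    (by rw [htot]; exact ENNReal.ofReal_ne_top)
  rw [← ENNReal.tsum_toReal_eq (fun _ => ENNReal.ofReal_ne_top), htot,
    ENNReal.toReal_ofReal (inv_nonneg.2 (poch_tendsto hx.le ht).1.le)] at h
  simpa only [ENNReal.toReal_ofReal (weight_nonneg ht hxt _)] using h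

/-! ### Comparison with the measure -/

lemma sigma_partition_ext {a b : Σ n : ℕ, Nat.Partition n} (h : a.2.parts = b.2.parts) :
    a = b := by
  rcases a with ⟨n, ⟨pa, ha, rfl⟩⟩
  rcases b with ⟨m, ⟨pb, hb, rfl⟩⟩
  simp only at h
  subst h
  rfl

/-- The encoding of partitions by multisets of natural numbers, each part lowered by one. -/
def partEquiv : Multiset ℕ ≃ Σ n : ℕ, Nat.Partition n where
  toFun s := ⟨(s.map Nat.succ).sum, ⟨s.map Nat.succ, by
    intro i hi
    obtain ⟨b, _, rfl⟩ := Multiset.mem_map.1 hi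
    exact Nat.succ_pos b, rfl⟩⟩
  invFun lam := lam.2.parts.map Nat.pred
  left_inv s := by simp [Multiset.map_map]
  right_inv lam := by
    apply sigma_partition_ext
    simp only [Multiset.map_map]
    conv_rhs => rw [← Multiset.map_id lam.2.parts]
    refine Multiset.map_congr rfl fun a ha => ?_
    exact Nat.succ_pred (lam.2.parts_pos ha).ne'

lemma glOrder_eq {Q : ℝ} (hQ : Q ≠ 0) (m : ℕ) : glOrder Q m = Q ^ (m ^ 2) * poch 1 Q⁻¹ m := by
  have h : ∏ j ∈ Finset.range m, (Q ^ (j + 1) - 1) =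
      Q ^ (∑ j ∈ Finset.range m, (j + 1)) * poch 1 Q⁻¹ m := by
    rw [poch, ← Finset.prod_pow_eq_pow_sum, ← Finset.prod_mul_distrib]
    refine Finset.prod_congr rfl fun j _ => ?_
    have := pow_ne_zero (j + 1) hQ
    rw [inv_pow]
    field_simp
  rw [glOrder, h, ← mul_assoc, ← pow_add]
  congr 2
  rw [← Finset.sum_range_id, ← Finset.sum_add_distrib]
  clear h
  induction m with
  | zero => rfl
  | succ m ih =>
    rw [Finset.sum_range_succ, ih]
    ring

/-- A symmetric double sum is its diagonal plus twice its lower triangle. -/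
lemma sum_symm_split (g : ℕ → ℕ → ℕ) (hg : ∀ i h, g i h = g h i) (n : ℕ) :
    ∑ i ∈ Finset.range n, ∑ h ∈ Finset.range n, g i h =
      2 * ∑ i ∈ Finset.range n, ∑ h ∈ Finset.range i, g i h + ∑ i ∈ Finset.range n, g i i := by
  induction n with
  | zero => simp
  | succ n ih =>
    simp only [Finset.sum_range_succ, Finset.sum_add_distrib, ih]
    rw [Finset.sum_congr rfl fun i _ => hg i n]
    ring

lemma sum_map_eq_range {s : Multiset ℕ} {n : ℕ} (hs : ∀ a ∈ s, a < n) (f : ℕ → ℕ) :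
    (s.map f).sum = ∑ i ∈ Finset.range n, s.count i * f i := by
  rw [Finset.sum_multiset_map_count]
  refine Finset.sum_subset (fun a ha => ?_) (fun a _ ha => ?_)
  · simpa using hs a (by simpa using ha)
  · rw [Multiset.count_eq_zero_of_notMem (by simpa using ha), zero_smul]

lemma colSq_eq {s : Multiset ℕ} {n : ℕ} (hs : ∀ a ∈ s.map Nat.succ, a < n) :
    colSq s = 2 * ∑ i ∈ Finset.range n, ∑ h ∈ Finset.range i,
        h * (s.map Nat.succ).count h * (s.map Nat.succ).count i +
      ∑ i ∈ Finset.range n, i * (s.map Nat.succ).count i ^ 2 := by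
  have h1 : colSq s = ((s.map Nat.succ).map fun a =>
      ((s.map Nat.succ).map fun b => min a b).sum).sum := by
    simp only [colSq, Multiset.map_map, Function.comp_def, Nat.succ_eq_add_one,
      Nat.add_min_add_right]
  rw [h1]
  set lam := s.map Nat.succ
  rw [sum_map_eq_range hs]
  simp only [sum_map_eq_range hs]
  rw [Finset.sum_congr rfl fun i _ => Finset.mul_sum (Finset.range n) _ (lam.count i)]
  rw [sum_symm_split _ (fun i h => by rw [min_comm]; ring)]
  refine congrArg₂ (· + ·) (congrArg (2 * ·) ?_) ?_
  · refine Finset.sum_congr rfl fun i _ => Finset.sum_congr rfl fun h hh => ?_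
    rw [min_eq_right (Finset.mem_range.1 hh).le]
    ring
  · refine Finset.sum_congr rfl fun i _ => ?_
    rw [min_self]
    ring

lemma measureM_partEquiv (U : ℝ) {Q : ℝ} (hQ : Q ≠ 0) (s : Multiset ℕ) :
    measureM U Q (partEquiv s) =
      (∏' r : ℕ, (1 - U * Q⁻¹ ^ (r + 1))) * weight U Q⁻¹ s := by
  have hs : ∀ a ∈ s.map Nat.succ, a < (s.map Nat.succ).sum + 1 := fun a ha =>
    Nat.lt_succ_of_le (Multiset.single_le_sum (fun _ _ => Nat.zero_le _) a ha)
  have h0 : (s.map Nat.succ).count 0 = 0 := by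
    rw [Multiset.count_eq_zero]; simp
  have hsucc : ∀ i, (s.map Nat.succ).count (i + 1) = s.count i := fun i =>
    Multiset.count_map_eq_count' Nat.succ s Nat.succ_injective i
  have hs' : ∀ a ∈ s, a < (s.map Nat.succ).sum := fun a ha => by
    have := hs (a + 1) (Multiset.mem_map_of_mem _ ha)
    omega
  have hden : Q ^ (2 * ∑ i ∈ Finset.range ((s.map Nat.succ).sum + 1), ∑ h ∈ Finset.range i,
            h * (s.map Nat.succ).count h * (s.map Nat.succ).count i
        + ∑ i ∈ Finset.range ((s.map Nat.succ).sum + 1),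
            (i - 1) * (s.map Nat.succ).count i ^ 2) *
      ∏ i ∈ Finset.range ((s.map Nat.succ).sum + 1), glOrder Q ((s.map Nat.succ).count i) =
      Q ^ colSq s * ∏ i ∈ s.toFinset, poch 1 Q⁻¹ (s.count i) := by
    simp only [glOrder_eq hQ, Finset.prod_mul_distrib, Finset.prod_pow_eq_pow_sum]
    rw [← mul_assoc, ← pow_add, add_assoc, ← Finset.sum_add_distrib, colSq_eq hs,
      prod_poch_eq hs', Finset.prod_range_succ', h0, poch_zero, mul_one]
    simp only [hsucc]
    congr 3
    refine Finset.sum_congr rfl fun i _ => ?_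
    -- Truncated subtraction at `i = 0` is harmless, as no part is `0`.
    rcases i with _ | i
    · simp
    · simp only [Nat.add_sub_cancel]; ring
  simp only [measureM, partEquiv, Equiv.coe_fn_mk]
  rw [hden, weight]
  simp only [inv_pow, div_eq_mul_inv, mul_inv]
  ring

theorem statement4 (u q : ℝ) (hq : 1 < q) (hu0 : 0 < u) (hu1 : u < 1) :
    (∀ lam : Σ n : ℕ, Nat.Partition n, 0 ≤ measureM (-u) (-q) lam) ∧
    HasSum (measureM (-u) (-q)) 1 := by
  have hq0 : 0 < q := by linarith
  have hQ : -q ≠ 0 := by linarith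
  have hx : |-u| < 1 := by rwa [abs_neg, abs_of_pos hu0]
  have ht : |(-q)⁻¹| < 1 := by
    rw [abs_inv, abs_neg, abs_of_pos hq0]
    exact inv_lt_one_of_one_lt₀ hq
  have hxt : 0 ≤ -u * (-q)⁻¹ := by
    rw [inv_neg, neg_mul_neg]
    positivity
  have hL := (poch_tendsto hx.le ht).1
  constructor
  · intro lam
    obtain ⟨s, rfl⟩ := partEquiv.surjective lam
    rw [measureM_partEquiv _ hQ]
    exact mul_nonneg hL.le (weight_nonneg ht hxt s)
  · rw [← partEquiv.hasSum_iff]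
    have h := (hasSum_weight hx ht hxt).mul_left (∏' r : ℕ, (1 - -u * (-q)⁻¹ ^ (r + 1)))
    rw [mul_inv_cancel₀ hL.ne'] at h
    exact h.congr_fun fun s => measureM_partEquiv _ hQ s
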